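/- Let (log 2)/(2 log 3) < α < 1, and let p, q satisfy ((1+α) − (log 2)/(log 3))/(2α − (log 2)/(log 3)) < p < ∞ and 1 ≤ q < ((1+α) − (log 2)/(log 3))·p / ((1+α) − (log 2)/(log 3) + (1−α)p). Then the integral over ⋃_{n≥1} ⋃_{k=1}^{2^{n−1}} R⁺_{n,k} of dist(x₁, C)^{(α−1)·pq/(p−q)} dx₁ dx₂ is finite. Consequently, the series Σ_{n≥1} 2ⁿ · (3^{−n})^{1 + α + (α−1)pq/(p−q)} converges. -/

import Mathlib

open MeasureTheory Set Metric Filter Topology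
open scoped ENNReal NNReal

noncomputable section

/-- The cusp function `ψ(x) = dist(x, C)^α` on `(0,1)`, zero elsewhere; here `C = cantorSet`
is Mathlib's classical ternary Cantor set. -/
def psiC (α : ℝ) (x : ℝ) : ℝ :=
  if x ∈ Ioo (0 : ℝ) 1 then infDist x cantorSet ^ α else 0

/-- The domain above the Cantor-cuspidal graph. -/
def OmegaPlus (α : ℝ) : Set (ℝ × ℝ) := {x | psiC α x.1 < x.2}

/-- The domain below the Cantor-cuspidal graph. -/
def OmegaMinus (α : ℝ) : Set (ℝ × ℝ) := {x | x.2 < psiC α x.1}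

/-- The Cantor-cuspidal graph `Γ`. -/
def graphC (α : ℝ) : Set (ℝ × ℝ) := {x | x.2 = psiC α x.1}

/-- Left endpoints of the `2^n` level-`n` closed intervals of the ternary Cantor
construction (in bit-reversed order). -/
def lep : ℕ → ℕ → ℝ
  | 0, _ => 0
  | n + 1, k => lep n (k / 2) + ((k % 2 : ℕ) : ℝ) * 2 / 3 ^ (n + 1)

/-- The removed middle-third open interval `I_{n+1}^{k+1}` (here `n ≥ 0`, `k < 2 ^ n`):
the open middle third of the level-`n` closed interval `[lep n k, lep n k + 3⁻ⁿ]`. -/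
def Ink (n k : ℕ) : Set ℝ :=
  Ioo (lep n k + 1 / 3 ^ (n + 1)) (lep n k + 2 / 3 ^ (n + 1))

/-- The set `R⁺_{n,k}` above the graph over `I_{n+1}^{k+1}`. -/
def RP (α : ℝ) (n k : ℕ) : Set (ℝ × ℝ) :=
  {x | x.1 ∈ Ink n k ∧ psiC α x.1 < x.2 ∧ x.2 < 2 * psiC α x.1}

/-- The set `R⁻_{n,k}` below the graph over `I_{n+1}^{k+1}`. -/
def RM (α : ℝ) (n k : ℕ) : Set (ℝ × ℝ) :=
  {x | x.1 ∈ Ink n k ∧ -(2 * psiC α x.1) < x.2 ∧ x.2 < psiC α x.1}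

/-- The union `⋃_{n,k} R⁺_{n,k}`. -/
def RPall (α : ℝ) : Set (ℝ × ℝ) := ⋃ n, ⋃ k ∈ {k : ℕ | k < 2 ^ n}, RP α n k

/-- The union `⋃_{n,k} R⁻_{n,k}`. -/
def RMall (α : ℝ) : Set (ℝ × ℝ) := ⋃ n, ⋃ k ∈ {k : ℕ | k < 2 ^ n}, RM α n k

open Classical in
/-- The explicit reflection over the Cantor-cuspidal graph `Γ`. -/
def reflMap (α : ℝ) (x : ℝ × ℝ) : ℝ × ℝ :=
  if x ∈ RPall α then (x.1, -3 * x.2 + 4 * psiC α x.1)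
  else if x ∈ RMall α then (x.1, -x.2 / 3 + 4 / 3 * psiC α x.1)
  else (x.1, -x.2)

/-! The affine map `y ↦ lep n k + y / 3 ^ n` of `[0,1]` onto a level-`n` interval of the
construction pulls `C` back to `C`, so every removed interval is a scaled copy of the gap
`(1/3, 2/3)`: it misses `C` and its endpoints lie in `C`. Over a removed interval of length `ℓ` the
distance to `C` is therefore the distance to the nearer endpoint, and the slice of `R⁺` over `x` has
length `dist(x, C)^α`, so the weight `dist(·, C)^s` integrates over the piece of `R⁺` above the
interval to at most `2 ℓ^{1+α+s} / (1+α+s)`. Summing over the `2^{n-1}` intervals with `ℓ = 3^{-n}`,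
`n ≥ 1`, leaves a geometric series of ratio `2 · 3^{-(1+α+s)}`, which converges because `1 + α + s`
exceeds the dimension `log 2 / log 3` of `C`. -/

section RegionBetween

variable {X : Type*} [MeasurableSpace X] {μ : Measure X} {f g : X → ℝ} {s : Set X} {w : X → ℝ≥0∞}

theorem setLIntegral_regionBetween_comp_fst (hf : Measurable f) (hg : Measurable g)
    (hs : MeasurableSet s) (hw : Measurable w) :
    ∫⁻ z in regionBetween f g s, w z.1 ∂μ.prod volume =
      ∫⁻ x in s, w x * ENNReal.ofReal (g x - f x) ∂μ := by
  have slice (x : X) (y : ℝ) :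
      (regionBetween f g s).indicator (fun z => w z.1) (x, y) =
        s.indicator (fun x => (Ioo (f x) (g x)).indicator (fun _ => w x) y) x := by
    grind [indicator, regionBetween]
  have hregion := measurableSet_regionBetween hf hg hs
  have hmeas : Measurable ((regionBetween f g s).indicator fun z => w z.1) :=
    (hw.comp measurable_fst).indicator hregion
  rw [← lintegral_indicator hregion, lintegral_prod _ hmeas.aemeasurable, ← lintegral_indicator hs]
  refine lintegral_congr fun x => ?_
  by_cases hx : x ∈ s
  · simp only [slice, indicator_of_mem hx, lintegral_indicator_const measurableSet_Ioo,
      Real.volume_Ioo]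
  · simp only [slice, indicator_of_notMem hx, lintegral_zero]

end RegionBetween

section Real

variable {a b t : ℝ}

theorem infDist_eq_min_of_disjoint_Ioo {s : Set ℝ} (ha : a ∈ s) (hb : b ∈ s)
    (hs : Disjoint (Ioo a b) s) {x : ℝ} (hx : x ∈ Icc a b) :
    infDist x s = min (x - a) (b - x) := by
  apply le_antisymm
  · apply le_min
    · exact (infDist_le_dist_of_mem ha).trans_eq (abs_of_nonneg (sub_nonneg.2 hx.1))
    · rw [← abs_of_nonneg (sub_nonneg.2 hx.2), abs_sub_comm]
      exact infDist_le_dist_of_mem hb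
  · refine (le_infDist ⟨a, ha⟩).2 fun y hy => ?_
    rw [Real.dist_eq]
    rcases le_or_gt y a with hya | hay
    · exact (min_le_left _ _).trans ((sub_le_sub_left hya x).trans (le_abs_self _))
    · have hby : b ≤ y := not_lt.1 fun hyb => disjoint_left.1 hs ⟨hay, hyb⟩ hy
      exact (min_le_right _ _).trans
        ((sub_le_sub_right hby x).trans (abs_sub_comm x y ▸ le_abs_self _))

theorem setLIntegral_Ioo_zero_rpow (hb : 0 < b) (ht : -1 < t) :
    ∫⁻ x in Ioo 0 b, ENNReal.ofReal (x ^ t) = ENNReal.ofReal (b ^ (t + 1) / (t + 1)) := by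
  have hnonneg : 0 ≤ᵐ[volume.restrict (Ioo 0 b)] fun x : ℝ => x ^ t :=
    ae_restrict_of_forall_mem measurableSet_Ioo fun x hx => Real.rpow_nonneg hx.1.le t
  rw [← ofReal_integral_eq_lintegral_ofReal
      ((intervalIntegral.integrableOn_Ioo_rpow_iff hb).2 ht) hnonneg,
    ← integral_Ioc_eq_integral_Ioo, ← intervalIntegral.integral_of_le hb.le,
    integral_rpow (Or.inl ht), Real.zero_rpow (by linarith), sub_zero]

theorem setLIntegral_Ioo_min_rpow_le (hab : a < b) (ht : -1 < t) :
    ∫⁻ x in Ioo a b, ENNReal.ofReal (min (x - a) (b - x) ^ t) ≤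
      ENNReal.ofReal (2 * ((b - a) ^ (t + 1) / (t + 1))) := by
  have hmeas : Measurable fun x : ℝ => ENNReal.ofReal (x ^ t) := by fun_prop
  have left : ∫⁻ x in Ioo a b, ENNReal.ofReal ((x - a) ^ t) =
      ENNReal.ofReal ((b - a) ^ (t + 1) / (t + 1)) := by
    have h := (measurePreserving_sub_right volume a).setLIntegral_comp_preimage
      (measurableSet_Ioo (a := 0) (b := b - a)) hmeas
    rwa [preimage_sub_const_Ioo, zero_add, sub_add_cancel,
      setLIntegral_Ioo_zero_rpow (sub_pos.2 hab) ht] at h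
  have right : ∫⁻ x in Ioo a b, ENNReal.ofReal ((b - x) ^ t) =
      ENNReal.ofReal ((b - a) ^ (t + 1) / (t + 1)) := by
    have h := (volume.measurePreserving_sub_left b).setLIntegral_comp_preimage
      (measurableSet_Ioo (a := 0) (b := b - a)) hmeas
    rwa [preimage_const_sub_Ioo, sub_zero, sub_sub_cancel,
      setLIntegral_Ioo_zero_rpow (sub_pos.2 hab) ht] at h
  calc ∫⁻ x in Ioo a b, ENNReal.ofReal (min (x - a) (b - x) ^ t)
      ≤ ∫⁻ x in Ioo a b, (ENNReal.ofReal ((x - a) ^ t) + ENNReal.ofReal ((b - x) ^ t)) := by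
        refine lintegral_mono fun x => ?_
        rcases min_choice (x - a) (b - x) with h | h <;> rw [h]
        exacts [le_self_add, le_add_self]
    _ = ENNReal.ofReal (2 * ((b - a) ^ (t + 1) / (t + 1))) := by
        rw [lintegral_add_left (by fun_prop), left, right, ← two_mul,
          ENNReal.ofReal_mul zero_le_two, ENNReal.ofReal_ofNat]

theorem summable_pow_mul_rpow_neg {c u : ℝ} (hc : 0 < c) (hb : 1 < b)
    (hu : Real.log c / Real.log b < u) :
    Summable fun n : ℕ => c ^ n * (b ^ (-(n : ℝ))) ^ u := by
  have hb0 : 0 < b := one_pos.trans hb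
  have hratio : c * b ^ (-u) < 1 := by
    rw [Real.rpow_neg hb0.le, ← div_eq_mul_inv, div_lt_one (by positivity)]
    rwa [Real.log_div_log, Real.logb_lt_iff_lt_rpow hb hc] at hu
  refine (summable_geometric_of_lt_one (by positivity) hratio).congr fun n => ?_
  rw [mul_pow, ← Real.rpow_mul_natCast hb0.le, ← Real.rpow_mul hb0.le, neg_mul, neg_mul, mul_comm u]

end Real

section CantorSet

theorem one_mem_cantorSet : (1 : ℝ) ∈ cantorSet := by
  refine mem_iInter.2 fun n => ?_
  induction n with
  | zero => exact right_mem_Icc.2 zero_le_one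
  | succ n ih => exact Or.inr ⟨1, ih, by norm_num⟩

theorem one_third_mem_cantorSet : (1 / 3 : ℝ) ∈ cantorSet := by
  rw [cantorSet_eq_union_halves]
  exact Or.inl ⟨1, one_mem_cantorSet, rfl⟩

theorem two_thirds_mem_cantorSet : (2 / 3 : ℝ) ∈ cantorSet := by
  rw [cantorSet_eq_union_halves]
  exact Or.inr ⟨0, zero_mem_cantorSet, by norm_num⟩

theorem disjoint_Ioo_cantorSet : Disjoint (Ioo (1 / 3 : ℝ) (2 / 3)) cantorSet := by
  refine disjoint_left.2 fun x hx hxC => ?_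
  rw [cantorSet_eq_union_halves] at hxC
  rcases hxC with ⟨y, hy, rfl⟩ | ⟨y, hy, rfl⟩
  · linarith [hx.1, (cantorSet_subset_unitInterval hy).2]
  · linarith [hx.2, (cantorSet_subset_unitInterval hy).1]

theorem div_three_mem_cantorSet_iff {y : ℝ} (hy : y ∈ Icc (0 : ℝ) 1) :
    y / 3 ∈ cantorSet ↔ y ∈ cantorSet := by
  refine ⟨fun h => ?_, fun h => cantorSet_eq_union_halves ▸ Or.inl ⟨y, h, rfl⟩⟩
  rw [cantorSet_eq_union_halves] at h
  rcases h with ⟨z, hz, hzy⟩ | ⟨z, hz, hzy⟩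
  · rwa [← show z = y by linarith]
  · linarith [hy.2, (cantorSet_subset_unitInterval hz).1]

theorem two_add_div_three_mem_cantorSet_iff {y : ℝ} (hy : y ∈ Icc (0 : ℝ) 1) :
    (2 + y) / 3 ∈ cantorSet ↔ y ∈ cantorSet := by
  refine ⟨fun h => ?_, fun h => cantorSet_eq_union_halves ▸ Or.inr ⟨y, h, rfl⟩⟩
  rw [cantorSet_eq_union_halves] at h
  rcases h with ⟨z, hz, hzy⟩ | ⟨z, hz, hzy⟩
  · linarith [hy.1, (cantorSet_subset_unitInterval hz).2]
  · rwa [← show z = y by linarith]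

theorem lep_add_div_mem_cantorSet_iff (n k : ℕ) {y : ℝ} (hy : y ∈ Icc (0 : ℝ) 1) :
    lep n k + y / 3 ^ n ∈ cantorSet ↔ y ∈ cantorSet := by
  induction n generalizing k y with
  | zero => simp only [lep, pow_zero, div_one, zero_add]
  | succ n ih =>
    have hlep : lep (n + 1) k + y / 3 ^ (n + 1) =
        lep n (k / 2) + (2 * (k % 2 : ℕ) + y) / 3 / 3 ^ n := by
      rw [lep]
      field_simp
      ring
    rw [hlep]
    rcases Nat.mod_two_eq_zero_or_one k with hk | hk <;> rw [hk]
    · rw [Nat.cast_zero, mul_zero, zero_add, ih _ ⟨by linarith [hy.1], by linarith [hy.2]⟩,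
        div_three_mem_cantorSet_iff hy]
    · rw [Nat.cast_one, mul_one, ih _ ⟨by linarith [hy.1], by linarith [hy.2]⟩,
        two_add_div_three_mem_cantorSet_iff hy]

end CantorSet

section Ink

variable (n k : ℕ)

theorem Ink_left_mem_cantorSet : lep n k + 1 / 3 ^ (n + 1) ∈ cantorSet := by
  rw [pow_succ', ← div_div, lep_add_div_mem_cantorSet_iff n k (by norm_num)]
  exact one_third_mem_cantorSet

theorem Ink_right_mem_cantorSet : lep n k + 2 / 3 ^ (n + 1) ∈ cantorSet := by
  rw [pow_succ', ← div_div, lep_add_div_mem_cantorSet_iff n k (by norm_num)]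
  exact two_thirds_mem_cantorSet

theorem disjoint_Ink_cantorSet : Disjoint (Ink n k) cantorSet := by
  refine disjoint_left.2 fun x hx hxC => ?_
  obtain ⟨y, rfl⟩ : ∃ y, lep n k + y / 3 ^ n = x := ⟨(x - lep n k) * 3 ^ n, by field_simp; ring⟩
  rw [Ink, pow_succ', ← div_div, ← div_div, mem_Ioo, add_lt_add_iff_left, add_lt_add_iff_left,
    div_lt_div_iff_of_pos_right (by positivity), div_lt_div_iff_of_pos_right (by positivity)] at hx
  rw [lep_add_div_mem_cantorSet_iff n k ⟨by linarith [hx.1], by linarith [hx.2]⟩] at hxC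
  exact disjoint_left.1 disjoint_Ioo_cantorSet hx hxC

theorem Ink_subset_Ioo : Ink n k ⊆ Ioo 0 1 := fun _ hx =>
  ⟨(cantorSet_subset_unitInterval (Ink_left_mem_cantorSet n k)).1.trans_lt hx.1,
    hx.2.trans_le (cantorSet_subset_unitInterval (Ink_right_mem_cantorSet n k)).2⟩

theorem measurableSet_Ink : MeasurableSet (Ink n k) := measurableSet_Ioo

variable {n k}

theorem infDist_cantorSet_of_mem_Ink {x : ℝ} (hx : x ∈ Ink n k) :
    infDist x cantorSet =
      min (x - (lep n k + 1 / 3 ^ (n + 1))) (lep n k + 2 / 3 ^ (n + 1) - x) :=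
  infDist_eq_min_of_disjoint_Ioo (Ink_left_mem_cantorSet n k) (Ink_right_mem_cantorSet n k)
    (disjoint_Ink_cantorSet n k) (Ioo_subset_Icc_self hx)

theorem infDist_cantorSet_pos_of_mem_Ink {x : ℝ} (hx : x ∈ Ink n k) : 0 < infDist x cantorSet :=
  (isClosed_cantorSet.notMem_iff_infDist_pos ⟨0, zero_mem_cantorSet⟩).1
    (disjoint_left.1 (disjoint_Ink_cantorSet n k) hx)

variable (n k)

theorem setLIntegral_Ink_infDist_rpow_le {u : ℝ} (hu : 0 < u) :
    ∫⁻ x in Ink n k, ENNReal.ofReal (infDist x cantorSet ^ (u - 1)) ≤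
      ENNReal.ofReal (2 * (((3 : ℝ) ^ (-((n + 1 : ℕ) : ℝ))) ^ u / u)) := by
  have hlength : lep n k + 2 / 3 ^ (n + 1) - (lep n k + 1 / 3 ^ (n + 1)) =
      (3 : ℝ) ^ (-((n + 1 : ℕ) : ℝ)) := by
    rw [Real.rpow_neg zero_le_three, Real.rpow_natCast]
    ring
  have hlt : lep n k + 1 / 3 ^ (n + 1) < lep n k + 2 / 3 ^ (n + 1) := by
    rw [← sub_pos, hlength]
    positivity
  have h := setLIntegral_Ioo_min_rpow_le hlt (show -1 < u - 1 by linarith)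
  rw [hlength, sub_add_cancel] at h
  refine (setLIntegral_congr_fun (measurableSet_Ink n k) fun x hx => ?_).trans_le h
  simp only [infDist_cantorSet_of_mem_Ink hx]

end Ink

section RP

variable (α s : ℝ)

theorem measurable_psiC : Measurable (psiC α) :=
  Measurable.ite measurableSet_Ioo (measurable_infDist.pow_const α) measurable_const

theorem setLIntegral_RP_infDist_rpow (n k : ℕ) :
    ∫⁻ x in RP α n k, ENNReal.ofReal (infDist x.1 cantorSet ^ s) =
      ∫⁻ x in Ink n k, ENNReal.ofReal (infDist x cantorSet ^ (α + s)) := by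
  have hψ := measurable_psiC α
  have hregion : RP α n k = regionBetween (psiC α) (fun x => 2 * psiC α x) (Ink n k) := rfl
  rw [hregion, Measure.volume_eq_prod,
    setLIntegral_regionBetween_comp_fst (w := fun x => ENNReal.ofReal (infDist x cantorSet ^ s))
      hψ (hψ.const_mul 2) (measurableSet_Ink n k) (by fun_prop)]
  refine setLIntegral_congr_fun (measurableSet_Ink n k) fun x hx => ?_
  have hψx : psiC α x = infDist x cantorSet ^ α := if_pos (Ink_subset_Ioo n k hx)
  have hpos := infDist_cantorSet_pos_of_mem_Ink hx
  simp only [hψx]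
  rw [← ENNReal.ofReal_mul (by positivity), two_mul, add_sub_cancel_right,
    ← Real.rpow_add hpos, add_comm]

theorem setLIntegral_RPall_infDist_rpow_le (hu : 0 < 1 + α + s) :
    ∫⁻ x in RPall α, ENNReal.ofReal (infDist x.1 cantorSet ^ s) ≤
      ∑' n : ℕ, ENNReal.ofReal
        (2 ^ (n + 1) * ((3 : ℝ) ^ (-((n + 1 : ℕ) : ℝ))) ^ (1 + α + s) / (1 + α + s)) := by
  refine (lintegral_iUnion_le _ _).trans (ENNReal.tsum_le_tsum fun n => ?_)
  have hpiece (k : ℕ) : ∫⁻ x in RP α n k, ENNReal.ofReal (infDist x.1 cantorSet ^ s) ≤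
      ENNReal.ofReal (2 * (((3 : ℝ) ^ (-((n + 1 : ℕ) : ℝ))) ^ (1 + α + s) / (1 + α + s))) := by
    rw [setLIntegral_RP_infDist_rpow, show α + s = 1 + α + s - 1 by ring]
    exact setLIntegral_Ink_infDist_rpow_le n k hu
  rw [biUnion_eq_iUnion]
  calc ∫⁻ x in ⋃ k : {k : ℕ | k < 2 ^ n}, RP α n k, ENNReal.ofReal (infDist x.1 cantorSet ^ s)
      ≤ ∑' k : {k : ℕ | k < 2 ^ n}, ENNReal.ofReal
          (2 * (((3 : ℝ) ^ (-((n + 1 : ℕ) : ℝ))) ^ (1 + α + s) / (1 + α + s))) :=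
        (lintegral_iUnion_le _ _).trans (ENNReal.tsum_le_tsum fun k => hpiece k)
    _ = ENNReal.ofReal
          (2 ^ (n + 1) * ((3 : ℝ) ^ (-((n + 1 : ℕ) : ℝ))) ^ (1 + α + s) / (1 + α + s)) := by
        have hcard : Fintype.card {k : ℕ | k < 2 ^ n} = 2 ^ n := by simp
        rw [tsum_fintype, Finset.sum_const, Finset.card_univ, hcard, ← ENNReal.ofReal_nsmul]
        congr 1
        push_cast [nsmul_eq_mul]
        ring

end RP

theorem lt_one_add_add_weight_exponent {d α p q : ℝ} (hd : d < 1 + α) (hα : α ≤ 1) (hp : 0 < p)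
    (hq : 0 < q) (hqp : q < ((1 + α) - d) * p / ((1 + α) - d + (1 - α) * p)) :
    d < 1 + α + (α - 1) * p * q / (p - q) := by
  have hdiff : 0 < 1 + α - d := sub_pos.2 hd
  have hα' : 0 ≤ 1 - α := sub_nonneg.2 hα
  have hkey : (1 - α) * p * q < (1 + α - d) * (p - q) := by
    rw [lt_div_iff₀ (by positivity)] at hqp
    linarith
  have hpq : 0 < p - q :=
    pos_of_mul_pos_right ((by positivity : 0 ≤ (1 - α) * p * q).trans_lt hkey) hdiff.le
  have hexp : -(1 + α - d) < (α - 1) * p * q / (p - q) := by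
    rw [lt_div_iff₀ hpq]
    linarith
  linarith

theorem integral_weight_RPall_finite_general (α s : ℝ)
    (hs : Real.log 2 / Real.log 3 < 1 + α + s) :
    (∫⁻ x in RPall α, ENNReal.ofReal (infDist x.1 cantorSet ^ s)) < ⊤ ∧
    Summable (fun n : ℕ => (2 : ℝ) ^ n * ((3 : ℝ) ^ (-(n : ℝ))) ^ (1 + α + s)) := by
  have hpos : 0 < 1 + α + s :=
    (div_pos (Real.log_pos one_lt_two) (Real.log_pos (by norm_num))).trans hs
  have hsum := summable_pow_mul_rpow_neg two_pos (by norm_num) hs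
  refine ⟨(setLIntegral_RPall_infDist_rpow_le α s hpos).trans_lt ?_, hsum⟩
  exact (((summable_nat_add_iff 1).2 hsum).div_const (1 + α + s)).tsum_ofReal_lt_top

/-- For the admissible range of `p` and `q`, the integral of
`dist(x₁, C)^{(α−1)pq/(p−q)}` over `⋃_{n,k} R⁺_{n,k}` is finite; consequently the series
`Σ_n 2ⁿ (3^{−n})^{1+α+(α−1)pq/(p−q)}` converges. -/
theorem integral_weight_RPall_finite (α p q : ℝ)
    (hα₁ : Real.log 2 / (2 * Real.log 3) < α) (hα₂ : α < 1)
    (hp : ((1 + α) - Real.log 2 / Real.log 3) / (2 * α - Real.log 2 / Real.log 3) < p)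
    (hq₁ : 1 ≤ q)
    (hq₂ : q < ((1 + α) - Real.log 2 / Real.log 3) * p /
        ((1 + α) - Real.log 2 / Real.log 3 + (1 - α) * p)) :
    (∫⁻ x in RPall α,
        ENNReal.ofReal (infDist x.1 cantorSet ^ ((α - 1) * p * q / (p - q)))) < ⊤ ∧
    Summable (fun n : ℕ =>
      (2 : ℝ) ^ n * ((3 : ℝ) ^ (-(n : ℝ))) ^ (1 + α + (α - 1) * p * q / (p - q))) := by
  have hd : Real.log 2 / Real.log 3 < 2 * α := by
    rwa [mul_comm, ← div_div, div_lt_iff₀' two_pos] at hα₁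
  have hp₀ : 0 < p := (div_pos (by linarith) (by linarith)).trans hp
  exact integral_weight_RPall_finite_general α _
    (lt_one_add_add_weight_exponent (by linarith) hα₂.le hp₀ (by linarith) hq₂)
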